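/- Let k be a field of characteristic p > 0 and n ≥ 3. Every finite-dimensional representation ρ : SL_n(ℤ) → GL_N(k) factors through the reduction map SL_n(ℤ) → SL_n(ℤ/ℓℤ) for some ℓ ≥ 1. -/

import Mathlib

open Matrix

lemma aux_nt (a b c : ℤ) (ha : a ≠ 0) (h : ∃ x y z : ℤ, x * a + y * b + z * c = 1) :
    ∃ s : ℤ, IsCoprime a (b + s * c) := by
  obtain ⟨x, y, z, h⟩ := h
  refine ⟨∏ p ∈ a.natAbs.primeFactors with ¬ ((p : ℕ) : ℤ) ∣ b, ((p : ℕ) : ℤ), ?_⟩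
  set s : ℤ := ∏ p ∈ a.natAbs.primeFactors with ¬ ((p : ℕ) : ℤ) ∣ b, ((p : ℕ) : ℤ) with hs
  rw [Int.isCoprime_iff_gcd_eq_one]
  by_contra hg
  obtain ⟨p, hp, hpd⟩ := Nat.exists_prime_and_dvd hg
  have hpa : (p : ℤ) ∣ a := (Int.natCast_dvd_natCast.2 hpd).trans (Int.gcd_dvd_left ..)
  have hpb : (p : ℤ) ∣ b + s * c := (Int.natCast_dvd_natCast.2 hpd).trans (Int.gcd_dvd_right ..)
  have hpp : Prime (p : ℤ) := Nat.prime_iff_prime_int.1 hp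
  have hmem : p ∈ a.natAbs.primeFactors := by
    rw [Nat.mem_primeFactors]
    exact ⟨hp, Int.natCast_dvd.1 hpa, by simpa using ha⟩
  by_cases hb : (p : ℤ) ∣ b
  · have h1 : (p : ℤ) ∣ s * c := (dvd_add_right hb).1 hpb
    rcases hpp.dvd_or_dvd h1 with h2 | h2
    · obtain ⟨r, hr, hpr⟩ := (hpp.dvd_finsetProd_iff _).1 h2
      rw [Finset.mem_filter] at hr
      have hrp := (Nat.mem_primeFactors.1 hr.1).1
      have := (Nat.prime_dvd_prime_iff_eq hp hrp).1 (Int.natCast_dvd_natCast.1 hpr)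
      subst this
      exact hr.2 hb
    · apply hpp.not_dvd_one
      rw [← h]
      exact dvd_add (dvd_add (hpa.mul_left _) (hb.mul_left _)) (h2.mul_left _)
  · have h1 : (p : ℤ) ∣ s := Finset.dvd_prod_of_mem (fun p : ℕ => (p : ℤ)) (by simp only [Finset.mem_filter]; exact ⟨hmem, hb⟩)
    exact hb ((dvd_add_left (h1.mul_right c)).1 hpb)

lemma aux_crt (m n a b : ℤ) (h : IsCoprime m n) : ∃ x, m ∣ x - a ∧ n ∣ x - b := by
  obtain ⟨u, v, h⟩ := h
  refine ⟨a * (v * n) + b * (u * m), ⟨(b - a) * u, ?_⟩, ⟨(a - b) * v, ?_⟩⟩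
  · linear_combination a * h
  · linear_combination b * h

lemma aux_coprime_of_dvd_sub {m x a : ℤ} (h : m ∣ x - a) (ha : IsCoprime a m) : IsCoprime x m := by
  obtain ⟨k, hk⟩ := h
  have : x = a + m * k := by linarith
  rw [this]
  exact ha.add_mul_left_left k

lemma aux_prime (a m : ℤ) (hm : m ≠ 0) (h : IsCoprime a m) :
    ∃ p : ℕ, p.Prime ∧ m ∣ p - a := by
  have h' : IsCoprime a (m.natAbs : ℤ) := by
    rw [Int.natCast_natAbs]; exact (IsCoprime.abs_right_iff a m).2 h
  obtain ⟨p, -, hp, hpa⟩ := Nat.forall_exists_prime_gt_and_zmodEq 0 (by simpa using hm) h'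
  refine ⟨p, hp, ?_⟩
  have := hpa.symm.dvd
  rwa [Int.natCast_natAbs, abs_dvd] at this

section sym
variable {H : Type*} [Group H] (q : ℤ) (hq4 : 4 ∣ q) (hq0 : q ≠ 0) (F : ℤ → ℤ → H)
  (h1 : ∀ b, q ∣ b → F 1 b = 1)
  (hb : ∀ a b t, q ∣ a - 1 → q ∣ b → IsCoprime a b → F a (b + q * t * a) = F a b)
  (ha : ∀ a b t, q ∣ a - 1 → q ∣ b → IsCoprime a b → F (a + t * b) b = F a b)
  (hm : ∀ a b c, q ∣ a - 1 → q ∣ b → q ∣ c → IsCoprime a b → IsCoprime a c →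
    F a b * F a c = F a (b * c))

include h1 hb ha hm in
lemma sym_kill (p : ℕ) (hp : p.Prime) (hpq : q ∣ p + 1) (b : ℤ) (hbq : q ∣ b)
    (hpb : IsCoprime (-p : ℤ) b) (m : ℕ) (hpm : p = 2 * m + 1) :
    F (-p) b ^ m = 1 := by
  have := Fact.mk hp
  have hpq' : q ∣ (-p : ℤ) - 1 := by
    have : (-p : ℤ) - 1 = - (p + 1) := by ring
    rw [this]; exact hpq.neg_right
  have hpow : ∀ k : ℕ, F (-p) b ^ (k+1) = F (-p) (b ^ (k+1)) := by
    intro k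
    induction k with
    | zero => simp
    | succ k ih =>
      rw [pow_succ, ih, hm _ _ _ hpq' (dvd_pow hbq (by omega)) hbq (hpb.pow_right) hpb, ← pow_succ]
  have hm0 : m ≠ 0 := by rintro rfl; simp at hpm; exact hp.one_lt.ne' hpm
  obtain ⟨k, rfl⟩ := Nat.exists_eq_succ_of_ne_zero hm0
  have hqc : ∀ e : ℤ, e = 1 ∨ e = -1 → IsCoprime (-p : ℤ) (q * e) ∧ F (-p) (q * e) = 1 := by
    intro e he
    obtain ⟨t, ht⟩ := hpq'
    have hee : e * e = 1 := by rcases he with rfl | rfl <;> norm_num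
    have : (-p : ℤ) = 1 + (t * e) * (q * e) := by linear_combination ht - t * q * hee
    rw [this, ha _ _ _ (by simp) (by simp) isCoprime_one_left, h1 _ (by simp)]
    exact ⟨by simpa using (isCoprime_one_left (x := q * e)).add_mul_right_left (t * e), rfl⟩
  have hpb0 : (b : ZMod p) ≠ 0 := by
    intro h
    rw [ZMod.intCast_zmod_eq_zero_iff_dvd] at h
    exact (Nat.prime_iff_prime_int.1 hp).not_isUnit ((hpb.neg_left).isUnit_of_dvd' (by simp) h)
  have hhalf : p / 2 = k + 1 := by omega
  have hpe := ZMod.pow_div_two_eq_neg_one_or_one p hpb0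
  rw [hhalf] at hpe
  obtain ⟨e, he, hpe'⟩ : ∃ e : ℤ, (e = 1 ∨ e = -1) ∧ (p : ℤ) ∣ b ^ (k+1) - e := by
    rcases hpe with h | h
    · exact ⟨1, Or.inl rfl, by rw [← ZMod.intCast_zmod_eq_zero_iff_dvd]; push_cast; rw [h]; simp⟩
    · exact ⟨-1, Or.inr rfl, by rw [← ZMod.intCast_zmod_eq_zero_iff_dvd]; push_cast; rw [h]; simp⟩
  obtain ⟨s, hs⟩ := hpe'
  have hq1 := hqc 1 (Or.inl rfl)
  rw [mul_one] at hq1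
  have hqe := hqc e he
  rw [Nat.succ_eq_add_one, hpow, ← one_mul (F _ _), ← hq1.2,
    hm _ _ _ hpq' dvd_rfl (dvd_pow hbq (by omega)) hq1.1 hpb.pow_right]
  have : q * b ^ (k+1) = q * e + q * (-s) * (-p) := by linear_combination q * hs
  rw [this, hb _ _ _ hpq' (by simp) hqe.1, hqe.2, hq1.2]

include hq4 hq0 h1 hb ha hm in
lemma sym_trivial (a b : ℤ) (haq : q ∣ a - 1) (hbq : q ∣ b) (hab : IsCoprime a b) :
    F a b = 1 := by
  by_cases hb0 : b = 0
  · subst hb0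
    have : IsUnit a := isCoprime_zero_right.1 hab
    rcases Int.isUnit_iff.1 this with rfl | rfl
    · exact h1 _ hbq
    · have := hq4.trans haq
      omega
  obtain ⟨p₁, hp₁, hd₁⟩ := aux_prime (-a) b hb0 hab.neg_left
  have hq₁ : q ∣ p₁ + 1 := by
    have : (p₁ : ℤ) + 1 = (p₁ - (-a)) - (a - 1) := by ring
    rw [this]; exact dvd_sub (hbq.trans hd₁) haq
  have hq₁' : q ∣ (-p₁ : ℤ) - 1 := by
    have : (-p₁ : ℤ) - 1 = - (p₁ + 1) := by ring
    rw [this]; exact hq₁.neg_right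
  have hc₁ : IsCoprime (-p₁ : ℤ) b := (aux_coprime_of_dvd_sub hd₁ hab.neg_left).neg_left
  have hF₁ : F (-p₁) b = F a b := by
    obtain ⟨k, hk⟩ := hd₁
    have : (-p₁ : ℤ) = a + (-k) * b := by linear_combination -hk
    rw [this, ha _ _ _ haq hbq hab]
  obtain ⟨m₁, hm₁⟩ : ∃ m : ℕ, p₁ = 2 * m + 1 := by
    have := hq4.trans hq₁
    exact ⟨p₁ / 2, by omega⟩
  have hm₁odd : Odd m₁ := by
    have := hq4.trans hq₁
    rw [Nat.odd_iff]; omega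
  have hm₁2 : IsCoprime (m₁ : ℤ) 2 := by
    have := Nat.isCoprime_iff_coprime.2 (Nat.coprime_two_right.2 hm₁odd)
    simpa using this
  have hm₁q : IsCoprime (m₁ : ℤ) q := by
    obtain ⟨k, hk⟩ := hq₁
    obtain ⟨u, v, huv⟩ := hm₁2
    subst hm₁
    push_cast at hk
    exact ⟨u - v * 2, v * k, by linear_combination huv - v * hk⟩
  have hm₁p : IsCoprime (m₁ : ℤ) p₁ := ⟨-2, 1, by rw [hm₁]; push_cast; ring⟩
  obtain ⟨b', hb'1, hb'2⟩ := aux_crt (q * p₁) m₁ b 1 (hm₁q.mul_right hm₁p).symm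
  have hb'm : IsCoprime b' (m₁ : ℤ) := aux_coprime_of_dvd_sub hb'2 isCoprime_one_left
  have hb'q : q ∣ b' := by
    have := dvd_add ((Dvd.intro _ rfl).trans hb'1) hbq
    simpa using this
  have hb'p : IsCoprime b' (p₁ : ℤ) :=
    aux_coprime_of_dvd_sub ((Dvd.intro_left _ rfl).trans hb'1) (by simpa using hc₁.neg_left.symm)
  have hF₂ : F (-p₁) b' = F a b := by
    obtain ⟨k, hk⟩ := hb'1
    have : b' = b + q * (-k) * (-p₁) := by linear_combination hk
    rw [this, hb _ _ _ hq₁' hbq hc₁, hF₁]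
  have hb'0 : b' ≠ 0 := by
    rintro rfl
    exact (Nat.prime_iff_prime_int.1 hp₁).not_isUnit (isCoprime_zero_left.1 hb'p)
  have hm₁0 : (m₁ : ℤ) ≠ 0 := by
    have := hm₁odd.pos
    omega
  obtain ⟨x, hx1, hx2⟩ := aux_crt b' m₁ p₁ (-1) hb'm
  obtain ⟨p₂, hp₂, hd₂⟩ := aux_prime x (b' * m₁) (mul_ne_zero hb'0 hm₁0)
    (IsCoprime.mul_right (aux_coprime_of_dvd_sub hx1 hb'p.symm)
      (aux_coprime_of_dvd_sub hx2 (isCoprime_one_left.neg_left)))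
  have h21 : b' ∣ p₂ - p₁ := by
    have := dvd_add ((Dvd.intro _ rfl).trans hd₂) hx1
    simpa using this
  have h22 : (m₁ : ℤ) ∣ p₂ + 1 := by
    have := dvd_add ((Dvd.intro_left _ rfl).trans hd₂) hx2
    have h : (p₂ : ℤ) - x + (x - -1) = p₂ + 1 := by ring
    rwa [h] at this
  have hq₂ : q ∣ p₂ + 1 := by
    have : (p₂ : ℤ) + 1 = (p₂ - p₁) + (p₁ + 1) := by ring
    rw [this]; exact dvd_add (hb'q.trans h21) hq₁
  have hc₂ : IsCoprime (-p₂ : ℤ) b' := (aux_coprime_of_dvd_sub h21 hb'p.symm).neg_left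
  have hF₃ : F (-p₂) b' = F a b := by
    obtain ⟨k, hk⟩ := h21
    have : (-p₂ : ℤ) = -p₁ + (-k) * b' := by linear_combination -hk
    rw [this, ha _ _ _ hq₁' hb'q hb'p.symm.neg_left, hF₂]
  obtain ⟨m₂, hm₂⟩ : ∃ m : ℕ, p₂ = 2 * m + 1 := by
    have := hq4.trans hq₂
    exact ⟨p₂ / 2, by omega⟩
  have k1 := sym_kill q F h1 hb ha hm p₁ hp₁ hq₁ b hbq hc₁ m₁ hm₁
  have k2 := sym_kill q F h1 hb ha hm p₂ hp₂ hq₂ b' hb'q hc₂ m₂ hm₂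
  rw [hF₁] at k1
  rw [hF₃] at k2
  have hcop : Nat.Coprime m₁ m₂ := by
    rw [← Nat.isCoprime_iff_coprime]
    obtain ⟨k, hk⟩ := h22
    obtain ⟨u, v, huv⟩ := hm₁2
    subst hm₂
    push_cast at hk
    exact ⟨u + v * k, - 2 * v, by linear_combination huv - v * hk⟩
  have := Nat.dvd_gcd (orderOf_dvd_of_pow_eq_one k1) (orderOf_dvd_of_pow_eq_one k2)
  rw [hcop] at this
  exact orderOf_eq_one_iff.1 (Nat.dvd_one.1 this)
end sym

def e01 (t : ℤ) : Matrix.SpecialLinearGroup (Fin 3) ℤ := ⟨!![1,t,0;0,1,0;0,0,1], by simp [det_fin_three]⟩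
def e02 (t : ℤ) : Matrix.SpecialLinearGroup (Fin 3) ℤ := ⟨!![1,0,t;0,1,0;0,0,1], by simp [det_fin_three]⟩
def e10 (t : ℤ) : Matrix.SpecialLinearGroup (Fin 3) ℤ := ⟨!![1,0,0;t,1,0;0,0,1], by simp [det_fin_three]⟩
def e12 (t : ℤ) : Matrix.SpecialLinearGroup (Fin 3) ℤ := ⟨!![1,0,0;0,1,t;0,0,1], by simp [det_fin_three]⟩
def e20 (t : ℤ) : Matrix.SpecialLinearGroup (Fin 3) ℤ := ⟨!![1,0,0;0,1,0;t,0,1], by simp [det_fin_three]⟩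
def e21 (t : ℤ) : Matrix.SpecialLinearGroup (Fin 3) ℤ := ⟨!![1,0,0;0,1,0;0,t,1], by simp [det_fin_three]⟩

/-- lower right block -/
def ph (a b c d : ℤ) (h : a * d - b * c = 1) : Matrix.SpecialLinearGroup (Fin 3) ℤ :=
  ⟨!![1,0,0;0,a,b;0,c,d], by simp [det_fin_three]; linear_combination h⟩
def ph01 (a b c d : ℤ) (h : a * d - b * c = 1) : Matrix.SpecialLinearGroup (Fin 3) ℤ :=
  ⟨!![a,b,0;c,d,0;0,0,1], by simp [det_fin_three]; linear_combination h⟩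
def ph02 (a b c d : ℤ) (h : a * d - b * c = 1) : Matrix.SpecialLinearGroup (Fin 3) ℤ :=
  ⟨!![a,0,b;0,1,0;c,0,d], by simp [det_fin_three]; linear_combination h⟩

/-- signed permutation swapping 0 and 1 -/
def pw : Matrix.SpecialLinearGroup (Fin 3) ℤ := e01 1 * e10 (-1) * e01 1
def pw' : Matrix.SpecialLinearGroup (Fin 3) ℤ := e12 1 * e21 (-1) * e12 1

lemma e01_c (t : ℤ) : (e01 t : Matrix (Fin 3) (Fin 3) ℤ) = !![1,t,0;0,1,0;0,0,1] := rfl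
lemma e02_c (t : ℤ) : (e02 t : Matrix (Fin 3) (Fin 3) ℤ) = !![1,0,t;0,1,0;0,0,1] := rfl
lemma e10_c (t : ℤ) : (e10 t : Matrix (Fin 3) (Fin 3) ℤ) = !![1,0,0;t,1,0;0,0,1] := rfl
lemma e12_c (t : ℤ) : (e12 t : Matrix (Fin 3) (Fin 3) ℤ) = !![1,0,0;0,1,t;0,0,1] := rfl
lemma e20_c (t : ℤ) : (e20 t : Matrix (Fin 3) (Fin 3) ℤ) = !![1,0,0;0,1,0;t,0,1] := rfl
lemma e21_c (t : ℤ) : (e21 t : Matrix (Fin 3) (Fin 3) ℤ) = !![1,0,0;0,1,0;0,t,1] := rfl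
lemma ph_c (a b c d : ℤ) (h : a * d - b * c = 1) : (ph a b c d h : Matrix (Fin 3) (Fin 3) ℤ) = !![1,0,0;0,a,b;0,c,d] := rfl
lemma ph01_c (a b c d : ℤ) (h : a * d - b * c = 1) : (ph01 a b c d h : Matrix (Fin 3) (Fin 3) ℤ) = !![a,b,0;c,d,0;0,0,1] := rfl
lemma ph02_c (a b c d : ℤ) (h : a * d - b * c = 1) : (ph02 a b c d h : Matrix (Fin 3) (Fin 3) ℤ) = !![a,0,b;0,1,0;c,0,d] := rfl

section
variable {H : Type*} [Group H] (q : ℤ) (π : Matrix.SpecialLinearGroup (Fin 3) ℤ →* H)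
  (h01 : ∀ t, q ∣ t → π (e01 t) = 1) (h02 : ∀ t, q ∣ t → π (e02 t) = 1)
  (h10 : ∀ t, q ∣ t → π (e10 t) = 1) (h12 : ∀ t, q ∣ t → π (e12 t) = 1)
  (h20 : ∀ t, q ∣ t → π (e20 t) = 1) (h21 : ∀ t, q ∣ t → π (e21 t) = 1)

include h10 h20 in
lemma comm10 (a b c d : ℤ) (h : a * d - b * c = 1) (ha : q ∣ a - 1) (hc : q ∣ c) (t : ℤ) :
    Commute (π (ph a b c d h)) (π (e10 t)) := by
  have key : ph a b c d h * e10 t = e10 t * e10 ((a-1)*t) * e20 (c*t) * ph a b c d h := by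
    apply Subtype.ext
    simp only [pw, pw', Matrix.SpecialLinearGroup.coe_mul, e01_c, e02_c, e10_c, e12_c, e20_c, e21_c, ph_c, ph01_c, ph02_c]
    ext i j
    fin_cases i <;> fin_cases j <;>
      simp [mul_apply, Fin.sum_univ_three] <;> ring
  have := congrArg π key
  simp only [map_mul, h10 _ (ha.mul_right t), h20 _ (hc.mul_right t), mul_one] at this
  exact this

include h10 h20 in
lemma comm20 (a b c d : ℤ) (h : a * d - b * c = 1) (hd : q ∣ d - 1) (hb : q ∣ b) (t : ℤ) :
    Commute (π (ph a b c d h)) (π (e20 t)) := by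
  have key : ph a b c d h * e20 t = e20 t * e20 ((d-1)*t) * e10 (b*t) * ph a b c d h := by
    apply Subtype.ext
    simp only [pw, pw', Matrix.SpecialLinearGroup.coe_mul, e01_c, e02_c, e10_c, e12_c, e20_c, e21_c, ph_c, ph01_c, ph02_c]
    ext i j
    fin_cases i <;> fin_cases j <;>
      simp [mul_apply, Fin.sum_univ_three] <;> ring
  have := congrArg π key
  simp only [map_mul, h20 _ (hd.mul_right t), h10 _ (hb.mul_right t), mul_one] at this
  exact this

include h01 h02 in
lemma comm01 (a b c d : ℤ) (h : a * d - b * c = 1) (ha : q ∣ a - 1) (hb : q ∣ b) (t : ℤ) :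
    Commute (π (ph a b c d h)) (π (e01 t)) := by
  have key : e01 t * ph a b c d h = ph a b c d h * e01 t * e01 ((a-1)*t) * e02 (b*t) := by
    apply Subtype.ext
    simp only [pw, pw', Matrix.SpecialLinearGroup.coe_mul, e01_c, e02_c, e10_c, e12_c, e20_c, e21_c, ph_c, ph01_c, ph02_c]
    ext i j
    fin_cases i <;> fin_cases j <;>
      simp [mul_apply, Fin.sum_univ_three] <;> ring
  have := congrArg π key
  simp only [map_mul, h01 _ (ha.mul_right t), h02 _ (hb.mul_right t), mul_one] at this
  exact this.symm

include h01 h02 in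
lemma comm02 (a b c d : ℤ) (h : a * d - b * c = 1) (hd : q ∣ d - 1) (hc : q ∣ c) (t : ℤ) :
    Commute (π (ph a b c d h)) (π (e02 t)) := by
  have key : e02 t * ph a b c d h = ph a b c d h * e02 t * e02 ((d-1)*t) * e01 (c*t) := by
    apply Subtype.ext
    simp only [pw, pw', Matrix.SpecialLinearGroup.coe_mul, e01_c, e02_c, e10_c, e12_c, e20_c, e21_c, ph_c, ph01_c, ph02_c]
    ext i j
    fin_cases i <;> fin_cases j <;>
      simp [mul_apply, Fin.sum_univ_three] <;> ring
  have := congrArg π key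
  simp only [map_mul, h02 _ (hd.mul_right t), h01 _ (hc.mul_right t), mul_one] at this
  exact this.symm

lemma e12_eq (t : ℤ) : e12 t = e10 t * e02 1 * e10 (-t) * e02 (-1) := by
  apply Subtype.ext
  simp only [pw, pw', Matrix.SpecialLinearGroup.coe_mul, e01_c, e02_c, e10_c, e12_c, e20_c, e21_c, ph_c, ph01_c, ph02_c]
  ext i j
  fin_cases i <;> fin_cases j <;>
    simp [mul_apply, Fin.sum_univ_three]

lemma e21_eq (t : ℤ) : e21 t = e20 t * e01 1 * e20 (-t) * e01 (-1) := by
  apply Subtype.ext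
  simp only [pw, pw', Matrix.SpecialLinearGroup.coe_mul, e01_c, e02_c, e10_c, e12_c, e20_c, e21_c, ph_c, ph01_c, ph02_c]
  ext i j
  fin_cases i <;> fin_cases j <;>
    simp [mul_apply, Fin.sum_univ_three]

include h01 h02 h10 h20 in
lemma comm12 (a b c d : ℤ) (h : a * d - b * c = 1) (ha : q ∣ a - 1) (hb : q ∣ b) (hc : q ∣ c)
    (hd : q ∣ d - 1) (t : ℤ) : Commute (π (ph a b c d h)) (π (e12 t)) := by
  rw [e12_eq]
  simp only [map_mul]
  have k1 := comm10 q π h10 h20 a b c d h ha hc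
  have k2 := comm02 q π h01 h02 a b c d h hd hc
  exact (((k1 t).mul_right (k2 1)).mul_right (k1 (-t))).mul_right (k2 (-1))

include h01 h02 h10 h20 in
lemma comm21 (a b c d : ℤ) (h : a * d - b * c = 1) (ha : q ∣ a - 1) (hb : q ∣ b) (hc : q ∣ c)
    (hd : q ∣ d - 1) (t : ℤ) : Commute (π (ph a b c d h)) (π (e21 t)) := by
  rw [e21_eq]
  simp only [map_mul]
  have k1 := comm20 q π h10 h20 a b c d h hd hb
  have k2 := comm01 q π h01 h02 a b c d h ha hb
  exact (((k1 t).mul_right (k2 1)).mul_right (k1 (-t))).mul_right (k2 (-1))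

lemma pw_ph (a b c d : ℤ) (h : a * d - b * c = 1) :
    pw * ph a b c d h = ph02 a b c d h * pw := by
  apply Subtype.ext
  simp only [pw, pw', Matrix.SpecialLinearGroup.coe_mul, e01_c, e02_c, e10_c, e12_c, e20_c, e21_c, ph_c, ph01_c, ph02_c]
  ext i j
  fin_cases i <;> fin_cases j <;>
    simp [mul_apply, Fin.sum_univ_three]

lemma pw_ph' (a b c d : ℤ) (h : a * d - b * c = 1) :
    pw' * ph02 a b c d h = ph01 a b c d h * pw' := by
  apply Subtype.ext
  simp only [pw, pw', Matrix.SpecialLinearGroup.coe_mul, e01_c, e02_c, e10_c, e12_c, e20_c, e21_c, ph_c, ph01_c, ph02_c]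
  ext i j
  fin_cases i <;> fin_cases j <;>
    simp [mul_apply, Fin.sum_univ_three]

include h01 h02 h10 h20 in
lemma ph02_eq (a b c d : ℤ) (h : a * d - b * c = 1) (ha : q ∣ a - 1) (hb : q ∣ b) (hc : q ∣ c) :
    π (ph02 a b c d h) = π (ph a b c d h) := by
  have key := congrArg π (pw_ph a b c d h)
  simp only [map_mul] at key
  have k1 := comm10 q π h10 h20 a b c d h ha hc
  have k2 := comm01 q π h01 h02 a b c d h ha hb
  have : Commute (π (ph a b c d h)) (π pw) := by
    simp only [pw, map_mul]
    exact ((k2 _).mul_right (k1 _)).mul_right (k2 _)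
  rw [← this.eq] at key
  exact (mul_right_cancel key).symm

include h01 h02 h10 h20 in
lemma ph01_eq (a b c d : ℤ) (h : a * d - b * c = 1) (ha : q ∣ a - 1) (hb : q ∣ b) (hc : q ∣ c)
    (hd : q ∣ d - 1) :
    π (ph01 a b c d h) = π (ph a b c d h) := by
  have key := congrArg π (pw_ph' a b c d h)
  simp only [map_mul] at key
  rw [ph02_eq q π h01 h02 h10 h20 a b c d h ha hb hc] at key
  have k1 := comm12 q π h01 h02 h10 h20 a b c d h ha hb hc hd
  have k2 := comm21 q π h01 h02 h10 h20 a b c d h ha hb hc hd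
  have : Commute (π (ph a b c d h)) (π pw') := by
    simp only [pw', map_mul]
    exact ((k1 _).mul_right (k2 _)).mul_right (k1 _)
  rw [← this.eq] at key
  exact (mul_right_cancel key).symm

include h21 in
lemma ph_indep (a b c d c' d' : ℤ) (h : a * d - b * c = 1) (h' : a * d' - b * c' = 1)
    (hc : q ∣ c) (hc' : q ∣ c') : π (ph a b c d h) = π (ph a b c' d' h') := by
  have key : ph a b c' d' h' = e21 (c' * d - d' * c) * ph a b c d h := by
    apply Subtype.ext
    simp only [pw, pw', Matrix.SpecialLinearGroup.coe_mul, e01_c, e02_c, e10_c, e12_c, e20_c, e21_c, ph_c, ph01_c, ph02_c]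
    ext i j
    fin_cases i <;> fin_cases j <;>
      simp [mul_apply, Fin.sum_univ_three]
    · linear_combination c * h' - c' * h
    · linear_combination d * h' - d' * h
  rw [key, map_mul, h21 _ (dvd_sub (hc'.mul_right _) (hc.mul_left _)), one_mul]

include h01 h02 h10 h12 h20 h21 in
lemma ph_mul (a b₁ c₁ d₁ b₂ c₂ d₂ c₃ d₃ : ℤ) (h₁ : a * d₁ - b₁ * c₁ = 1)
    (h₂ : a * d₂ - b₂ * c₂ = 1) (h₃ : a * d₃ - (b₁ * b₂) * c₃ = 1) (ha : q ∣ a - 1)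
    (hb₁ : q ∣ b₁) (hb₂ : q ∣ b₂) (hc₁ : q ∣ c₁) (hc₂ : q ∣ c₂) (hc₃ : q ∣ c₃)
    (hd₁ : q ∣ d₁ - 1) :
    π (ph a b₁ c₁ d₁ h₁) * π (ph a b₂ c₂ d₂ h₂) = π (ph a (b₁ * b₂) c₃ d₃ h₃) := by
  have key : ph01 a b₁ c₁ d₁ h₁ * ph a b₂ c₂ d₂ h₂ * e01 (-b₁) =
      e10 (c₁ * d₃ - d₁ * b₂ * c₃) * e20 (-d₂ * c₃) *
        e21 c₂ * e12 b₂ * ph02 a (b₁ * b₂) c₃ d₃ h₃ := by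
    apply Subtype.ext
    simp only [pw, pw', Matrix.SpecialLinearGroup.coe_mul, e01_c, e02_c, e10_c, e12_c, e20_c, e21_c, ph_c, ph01_c, ph02_c]
    ext i j
    fin_cases i <;> fin_cases j <;>
      simp [mul_apply, Fin.sum_univ_three]
    · ring
    · linear_combination -c₁ * h₃ + b₂ * c₃ * h₁
    · linear_combination h₁
    · linear_combination -d₁ * b₂ * h₃ + b₂ * d₃ * h₁
    · linear_combination c₃ * h₂
    · linear_combination -d₂ * h₃ + d₃ * h₂
  have := congrArg π key
  simp only [map_mul] at this
  rw [ph01_eq q π h01 h02 h10 h20 a b₁ c₁ d₁ h₁ ha hb₁ hc₁ hd₁,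
    ph02_eq q π h01 h02 h10 h20 _ _ _ _ h₃ ha (hb₁.mul_right _) hc₃, h01 _ hb₁.neg_right, h12 _ hb₂,
    h21 _ hc₂, h10, h20] at this
  · simpa using this
  · exact hc₃.mul_left _
  · exact dvd_sub (hc₁.mul_right _) (hc₃.mul_left _)
end

section
variable {H : Type*} [Group H] (q : ℤ) (π : Matrix.SpecialLinearGroup (Fin 3) ℤ →* H)

open Classical in
noncomputable def Fsym (a b : ℤ) : H :=
  if h : ∃ cd : ℤ × ℤ, a * cd.2 - b * cd.1 = 1 ∧ q ∣ cd.1 then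
    π (ph a b h.choose.1 h.choose.2 h.choose_spec.1) else 1

lemma Fsym_eq (h21 : ∀ t, q ∣ t → π (e21 t) = 1) (a b c d : ℤ) (h : a * d - b * c = 1)
    (hc : q ∣ c) : Fsym q π a b = π (ph a b c d h) := by
  have hex : ∃ cd : ℤ × ℤ, a * cd.2 - b * cd.1 = 1 ∧ q ∣ cd.1 := ⟨(c, d), h, hc⟩
  rw [Fsym, dif_pos hex]
  exact ph_indep q π h21 _ _ _ _ _ _ _ _ hex.choose_spec.2 hc

lemma exists_cd (a b : ℤ) (ha : q ∣ a - 1) (hab : IsCoprime a b) :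
    ∃ c d : ℤ, a * d - b * c = 1 ∧ q ∣ c := by
  have h1 : IsCoprime a q := by
    obtain ⟨k, hk⟩ := ha
    exact ⟨1, -k, by linear_combination hk⟩
  obtain ⟨x, y, hxy⟩ := hab.mul_right h1
  exact ⟨-(y * q), x, by linear_combination hxy, by simp⟩

lemma dvd_d (a b c d : ℤ) (h : a * d - b * c = 1) (ha : q ∣ a - 1) (hc : q ∣ c) : q ∣ d - 1 := by
  have : d - 1 = b * c - (a - 1) * d := by linear_combination h
  rw [this]
  exact dvd_sub (hc.mul_left _) (ha.mul_right _)

theorem base3 (hq4 : 4 ∣ q) (hq0 : q ≠ 0)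
    (h01 : ∀ t, q ∣ t → π (e01 t) = 1) (h02 : ∀ t, q ∣ t → π (e02 t) = 1)
    (h10 : ∀ t, q ∣ t → π (e10 t) = 1) (h12 : ∀ t, q ∣ t → π (e12 t) = 1)
    (h20 : ∀ t, q ∣ t → π (e20 t) = 1) (h21 : ∀ t, q ∣ t → π (e21 t) = 1)
    (a b c d : ℤ) (h : a * d - b * c = 1) (ha : q ∣ a - 1) (hb : q ∣ b) (hc : q ∣ c) :
    π (ph a b c d h) = 1 := by
  rw [← Fsym_eq q π h21 a b c d h hc]
  apply sym_trivial q hq4 hq0 (Fsym q π)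
  · intro b hb
    rw [Fsym_eq q π h21 1 b 0 1 (by ring) (dvd_zero _), ← h12 b hb]
    rfl
  · intro a b t ha hb hab
    obtain ⟨c, d, h, hc⟩ := exists_cd q a b ha hab
    rw [Fsym_eq q π h21 a b c d h hc,
      Fsym_eq q π h21 a (b + q * t * a) c (d + q * t * c) (by linear_combination h) hc]
    have key : ph a (b + q * t * a) c (d + q * t * c) (by linear_combination h)
        = ph a b c d h * e12 (q * t) := by
      apply Subtype.ext
      simp only [Matrix.SpecialLinearGroup.coe_mul, e12_c, ph_c]
      ext i j
      fin_cases i <;> fin_cases j <;> simp [mul_apply, Fin.sum_univ_three] <;> ring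
    rw [key, map_mul, h12 _ (Dvd.intro _ rfl), mul_one]
  · intro a b t ha hb hab
    obtain ⟨c, d, h, hc⟩ := exists_cd q a b ha hab
    have hd := dvd_d q a b c d h ha hc
    have hh : (a + t * b) * (d - t * b) - b * (c + t * d - t * (a + t * b)) = 1 := by
      linear_combination h
    rw [Fsym_eq q π h21 a b c d h hc,
      Fsym_eq q π h21 (a + t * b) b (c + t * d - t * (a + t * b)) (d - t * b) hh ?_]
    · have key : e21 t * ph (a + t * b) b (c + t * d - t * (a + t * b)) (d - t * b) hh
          = ph a b c d h * e21 t := by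
        apply Subtype.ext
        simp only [Matrix.SpecialLinearGroup.coe_mul, e21_c, ph_c]
        ext i j
        fin_cases i <;> fin_cases j <;> simp [mul_apply, Fin.sum_univ_three] <;> ring
      have key := congrArg π key
      rw [map_mul, map_mul, (comm21 q π h01 h02 h10 h20 a b c d h ha hb hc hd t).eq] at key
      exact mul_left_cancel key
    · have : c + t * d - t * (a + t * b) = c + t * ((d - 1) - (a - 1)) - t * t * b := by ring
      rw [this]
      exact dvd_sub (dvd_add hc ((dvd_sub hd ha).mul_left _)) (hb.mul_left _)
  · intro a b₁ b₂ ha hb₁ hb₂ h1 h2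
    obtain ⟨c₁, d₁, e₁, hc₁⟩ := exists_cd q a b₁ ha h1
    obtain ⟨c₂, d₂, e₂, hc₂⟩ := exists_cd q a b₂ ha h2
    obtain ⟨c₃, d₃, e₃, hc₃⟩ := exists_cd q a (b₁ * b₂) ha (h1.mul_right h2)
    rw [Fsym_eq q π h21 _ _ _ _ e₁ hc₁, Fsym_eq q π h21 _ _ _ _ e₂ hc₂,
      Fsym_eq q π h21 _ _ _ _ e₃ hc₃]
    exact ph_mul q π h01 h02 h10 h12 h20 h21 a b₁ c₁ d₁ b₂ c₂ d₂ c₃ d₃ e₁ e₂ e₃ ha hb₁ hb₂ hc₁ hc₂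
      hc₃ (dvd_d q a b₁ c₁ d₁ e₁ ha hc₁)
  · exact ha
  · exact hb
  · exact ⟨d, -c, by linear_combination h⟩
end

abbrev tv {ι R : Type*} [DecidableEq ι] [Fintype ι] [CommRing R] {i j : ι} (hij : i ≠ j) (b : R) :
    Matrix.SpecialLinearGroup ι R := Matrix.SpecialLinearGroup.transvection hij b

section ops
variable {ι R : Type*} [DecidableEq ι] [Fintype ι] [CommRing R]

lemma mul_tv_apply {i j : ι} (hij : i ≠ j) (b : R) (A : Matrix ι ι R) (k l : ι) :
    (A * (tv hij b : Matrix ι ι R)) k l = if l = j then A k j + b * A k i else A k l := by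
  change (A * Matrix.transvection i j b) k l = _
  split_ifs with h
  · subst h; simp
  · simp [h]

lemma tv_mul_apply {i j : ι} (hij : i ≠ j) (b : R) (A : Matrix ι ι R) (k l : ι) :
    ((tv hij b : Matrix ι ι R) * A) k l = if k = i then A i l + b * A j l else A k l := by
  change (Matrix.transvection i j b * A) k l = _
  split_ifs with h
  · subst h; simp
  · simp [h]

variable (I : Ideal R) (S : Subgroup (Matrix.SpecialLinearGroup ι R))
  (hS : ∀ (i j : ι) (hij : i ≠ j) (b : R), b ∈ I → tv hij b ∈ S)

include hS in
lemma op1 (k : ι) (v : ι → R) (hv : ∀ l, v l ∈ I) (hvk : v k = 0) :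
    ∃ E ∈ S, ∀ (A : Matrix ι ι R) (i j : ι),
      (A * (E : Matrix ι ι R)) i j = if j = k then A i k + ∑ l, A i l * v l else A i j := by
  have key : ∀ s : Finset ι, k ∉ s → ∃ E ∈ S, ∀ (A : Matrix ι ι R) (i j : ι),
      (A * (E : Matrix ι ι R)) i j = if j = k then A i k + ∑ l ∈ s, A i l * v l else A i j := by
    intro s
    induction s using Finset.induction_on with
    | empty =>
      intro _
      refine ⟨1, S.one_mem, fun A i j => ?_⟩
      simp only [Matrix.SpecialLinearGroup.coe_one, mul_one, Finset.sum_empty, add_zero]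
      split_ifs with h
      · rw [h]
      · rfl
    | insert l s hl ih =>
      intro hk
      simp only [Finset.mem_insert, not_or] at hk
      obtain ⟨E, hE, h⟩ := ih hk.2
      have hlk : l ≠ k := fun h => hk.1 h.symm
      refine ⟨E * tv hlk (v l), S.mul_mem hE (hS _ _ _ _ (hv l)), fun A i j => ?_⟩
      rw [Matrix.SpecialLinearGroup.coe_mul, ← mul_assoc, mul_tv_apply, h, h, h,
        Finset.sum_insert hl, if_pos rfl, if_neg hlk]
      split_ifs
      · ring
      · rfl
  obtain ⟨E, hE, h⟩ := key (Finset.univ.erase k) (by simp)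
  refine ⟨E, hE, fun A i j => ?_⟩
  rw [h]
  rw [← Finset.add_sum_erase _ _ (Finset.mem_univ k), hvk, mul_zero, zero_add]

include hS in
lemma op2 (k : ι) (v : ι → R) (hv : ∀ l, v l ∈ I) (hvk : v k = 0) :
    ∃ E ∈ S, ∀ (A : Matrix ι ι R) (i j : ι),
      (A * (E : Matrix ι ι R)) i j = A i j + v j * A i k := by
  have key : ∀ s : Finset ι, k ∉ s → ∃ E ∈ S, ∀ (A : Matrix ι ι R) (i j : ι),
      (A * (E : Matrix ι ι R)) i j = if j ∈ s then A i j + v j * A i k else A i j := by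
    intro s
    induction s using Finset.induction_on with
    | empty =>
      intro _
      refine ⟨1, S.one_mem, fun A i j => ?_⟩
      simp
    | insert l s hl ih =>
      intro hk
      simp only [Finset.mem_insert, not_or] at hk
      obtain ⟨E, hE, h⟩ := ih hk.2
      refine ⟨E * tv hk.1 (v l), S.mul_mem hE (hS _ _ _ _ (hv l)), fun A i j => ?_⟩
      rw [Matrix.SpecialLinearGroup.coe_mul, ← mul_assoc, mul_tv_apply, h, h, h,
        if_neg hl, if_neg hk.2]
      by_cases hj : j = l
      · subst hj; simp
      · simp [hj]
  obtain ⟨E, hE, h⟩ := key (Finset.univ.erase k) (by simp)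
  refine ⟨E, hE, fun A i j => ?_⟩
  rw [h]
  by_cases hj : j = k
  · subst hj; simp [hvk]
  · simp [hj]

include hS in
lemma op3 (k : ι) (v : ι → R) (hv : ∀ l, v l ∈ I) (hvk : v k = 0) :
    ∃ E ∈ S, ∀ (A : Matrix ι ι R) (i j : ι),
      ((E : Matrix ι ι R) * A) i j = A i j + v i * A k j := by
  have key : ∀ s : Finset ι, k ∉ s → ∃ E ∈ S, ∀ (A : Matrix ι ι R) (i j : ι),
      ((E : Matrix ι ι R) * A) i j = if i ∈ s then A i j + v i * A k j else A i j := by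
    intro s
    induction s using Finset.induction_on with
    | empty =>
      intro _
      refine ⟨1, S.one_mem, fun A i j => ?_⟩
      simp
    | insert l s hl ih =>
      intro hk
      simp only [Finset.mem_insert, not_or] at hk
      obtain ⟨E, hE, h⟩ := ih hk.2
      have hlk : l ≠ k := fun h => hk.1 h.symm
      refine ⟨tv hlk (v l) * E, S.mul_mem (hS _ _ _ _ (hv l)) hE, fun A i j => ?_⟩
      rw [Matrix.SpecialLinearGroup.coe_mul, mul_assoc, tv_mul_apply, h, h, h,
        if_neg hl, if_neg hk.2]
      by_cases hj : i = l
      · subst hj; simp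
      · simp [hj]
  obtain ⟨E, hE, h⟩ := key (Finset.univ.erase k) (by simp)
  refine ⟨E, hE, fun A i j => ?_⟩
  rw [h]
  by_cases hj : i = k
  · subst hj; simp [hvk]
  · simp [hj]
end ops

section emb
variable {R : Type*} [CommRing R] {m : ℕ}

def embM (A : Matrix (Fin m) (Fin m) R) : Matrix (Fin (m+1)) (Fin (m+1)) R :=
  Matrix.of (Fin.cons (Fin.cons 1 0) (fun i => Fin.cons 0 (A i)))

@[simp] lemma embM_00 (A : Matrix (Fin m) (Fin m) R) : embM A 0 0 = 1 := rfl
@[simp] lemma embM_0s (A : Matrix (Fin m) (Fin m) R) (j) : embM A 0 (Fin.succ j) = 0 := rfl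
@[simp] lemma embM_s0 (A : Matrix (Fin m) (Fin m) R) (i) : embM A (Fin.succ i) 0 = 0 := rfl
@[simp] lemma embM_ss (A : Matrix (Fin m) (Fin m) R) (i j) :
    embM A (Fin.succ i) (Fin.succ j) = A i j := rfl

lemma embM_ext (B : Matrix (Fin (m+1)) (Fin (m+1)) R) (h00 : B 0 0 = 1)
    (h0s : ∀ j : Fin m, B 0 j.succ = 0) (hs0 : ∀ j : Fin m, B j.succ 0 = 0) :
    embM (B.submatrix Fin.succ Fin.succ) = B := by
  ext i j
  refine Fin.cases ?_ (fun i => ?_) i <;> refine Fin.cases ?_ (fun j => ?_) j <;>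
    simp [h00, h0s, hs0]

lemma embM_det (A : Matrix (Fin m) (Fin m) R) : (embM A).det = A.det := by
  rw [Matrix.det_succ_row_zero, Fin.sum_univ_succ]
  simp
  congr 1

lemma embM_mul (A B : Matrix (Fin m) (Fin m) R) : embM (A * B) = embM A * embM B := by
  ext i j
  refine Fin.cases ?_ (fun i => ?_) i <;> refine Fin.cases ?_ (fun j => ?_) j <;>
    simp [Matrix.mul_apply, Fin.sum_univ_succ]

lemma embM_one : embM (1 : Matrix (Fin m) (Fin m) R) = 1 := by
  ext i j
  refine Fin.cases ?_ (fun i => ?_) i <;> refine Fin.cases ?_ (fun j => ?_) j <;>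
    simp [Matrix.one_apply, Fin.succ_ne_zero, (Fin.succ_ne_zero _).symm]

def emb : Matrix.SpecialLinearGroup (Fin m) R →* Matrix.SpecialLinearGroup (Fin (m+1)) R where
  toFun A := ⟨embM A.1, by rw [embM_det]; exact A.2⟩
  map_one' := Subtype.ext embM_one
  map_mul' A B := Subtype.ext (embM_mul A.1 B.1)

lemma emb_coe (A : Matrix.SpecialLinearGroup (Fin m) R) :
    (emb A : Matrix (Fin (m+1)) (Fin (m+1)) R) = embM A.1 := rfl

lemma emb_tv {i j : Fin m} (hij : i ≠ j) (b : R) :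
    emb (tv hij b) = tv (fun h => hij (Fin.succ_injective _ h)) b := by
  apply Subtype.ext
  rw [emb_coe, tv, tv, Matrix.SpecialLinearGroup.transvection_coe,
    Matrix.SpecialLinearGroup.transvection_coe]
  ext k l
  refine Fin.cases ?_ (fun k => ?_) k <;> refine Fin.cases ?_ (fun l => ?_) l <;>
    simp [Matrix.one_apply, Matrix.single_apply, Fin.succ_ne_zero, (Fin.succ_ne_zero _).symm]

lemma exists_emb (B : Matrix.SpecialLinearGroup (Fin (m+1)) R) (h00 : B.1 0 0 = 1)
    (h0s : ∀ j : Fin m, B.1 0 j.succ = 0) (hs0 : ∀ j : Fin m, B.1 j.succ 0 = 0) :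
    ∃ A, emb A = B := by
  have := embM_ext B.1 h00 h0s hs0
  refine ⟨⟨B.1.submatrix Fin.succ Fin.succ, ?_⟩, Subtype.ext this⟩
  rw [← embM_det, this]
  exact B.2

lemma clear (I : Ideal R) (S : Subgroup (Matrix.SpecialLinearGroup (Fin (m+1)) R))
    (hS : ∀ (i j : Fin (m+1)) (hij : i ≠ j) (b : R), b ∈ I → tv hij b ∈ S)
    (A : Matrix.SpecialLinearGroup (Fin (m+1)) R) (h00 : A.1 0 0 = 1)
    (h0s : ∀ j : Fin m, A.1 0 j.succ ∈ I) (hs0 : ∀ j : Fin m, A.1 j.succ 0 ∈ I) :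
    ∃ A', ∃ E₁ ∈ S, ∃ E₂ ∈ S, emb A' = E₁ * A * E₂ := by
  obtain ⟨E₂, hE₂, h2⟩ := op2 I S hS 0 (Fin.cons 0 (fun j => - A.1 0 j.succ))
    (fun l => Fin.cases (by simp) (fun j => by simpa using h0s j) l) rfl
  obtain ⟨E₁, hE₁, h1⟩ := op3 I S hS 0 (Fin.cons 0 (fun j => - A.1 j.succ 0))
    (fun l => Fin.cases (by simp) (fun j => by simpa using hs0 j) l) rfl
  obtain ⟨A', hA'⟩ := exists_emb (E₁ * A * E₂)
    (by simp only [Matrix.SpecialLinearGroup.coe_mul]; rw [h2, h1]; simp [h00])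
    (fun j => by simp only [Matrix.SpecialLinearGroup.coe_mul]; rw [h2, h1, h1]; simp [h00])
    (fun j => by simp only [Matrix.SpecialLinearGroup.coe_mul]; rw [h2, h1]; simp [h00])
  exact ⟨A', E₁, hE₁, E₂, hE₂, hA'⟩
end emb

lemma row_bezout {ι R : Type*} [DecidableEq ι] [Fintype ι] [CommRing R]
    (A : Matrix.SpecialLinearGroup ι R) (k : ι) : ∃ x : ι → R, ∑ l, x l * A.1 k l = 1 := by
  refine ⟨fun l => (A⁻¹).1 l k, ?_⟩
  have h : (A * A⁻¹).1 k k = 1 := by rw [mul_inv_cancel]; simp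
  rw [Matrix.SpecialLinearGroup.coe_mul, Matrix.mul_apply] at h
  refine Eq.trans ?_ h
  exact Finset.sum_congr rfl fun l _ => mul_comm _ _

lemma exists_unit_add (ℓ : ℕ) (hl : ℓ ≠ 0) (a c x : ZMod ℓ) (h : x * a + c = 1) :
    ∃ s : ZMod ℓ, IsUnit (a + s * c) := by
  obtain ⟨a, rfl⟩ := ZMod.intCast_surjective a
  obtain ⟨c, rfl⟩ := ZMod.intCast_surjective c
  obtain ⟨x, rfl⟩ := ZMod.intCast_surjective x
  have h' : ((x * a + c - 1 : ℤ) : ZMod ℓ) = 0 := by push_cast; rw [h]; ring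
  rw [ZMod.intCast_zmod_eq_zero_iff_dvd] at h'
  obtain ⟨k, hk⟩ := h'
  obtain ⟨s, u, v, hs⟩ := aux_nt (ℓ : ℤ) a c (by exact_mod_cast hl)
    ⟨-k, x, 1, by linear_combination hk⟩
  refine ⟨(s : ZMod ℓ), IsUnit.of_mul_eq_one (v : ZMod ℓ) ?_⟩
  have := congrArg (Int.cast : ℤ → ZMod ℓ) hs
  push_cast at this
  rw [ZMod.natCast_self] at this
  linear_combination this

theorem tv_gen (ℓ : ℕ) (hl : ℓ ≠ 0) (m : ℕ) :
    ∀ (S : Subgroup (Matrix.SpecialLinearGroup (Fin (m+1)) (ZMod ℓ)))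
      (_ : ∀ (i j : Fin (m+1)) (hij : i ≠ j) (b : ZMod ℓ), tv hij b ∈ S)
      (A : Matrix.SpecialLinearGroup (Fin (m+1)) (ZMod ℓ)), A ∈ S := by
  induction m with
  | zero =>
    intro S _ A
    have : A = 1 := by
      apply Subtype.ext
      have := A.2
      rw [Matrix.det_fin_one] at this
      ext i j
      obtain rfl : i = 0 := Fin.ext (by omega)
      obtain rfl : j = 0 := Fin.ext (by omega)
      exact this
    rw [this]; exact S.one_mem
  | succ m ih =>
    intro S hS A
    have hS' : ∀ (i j : Fin (m+2)) (hij : i ≠ j) (b : ZMod ℓ), b ∈ (⊤ : Ideal (ZMod ℓ)) →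
      tv hij b ∈ S := fun i j hij b _ => hS i j hij b
    obtain ⟨x, hx⟩ := row_bezout A 0
    rw [Fin.sum_univ_succ] at hx
    obtain ⟨s, hs⟩ := exists_unit_add ℓ hl _ _ _ hx
    obtain ⟨E, hE, h1⟩ := op1 ⊤ S hS' 0 (Fin.cons 0 (fun j => s * x j.succ)) (by simp) rfl
    have h10 : (0 : Fin (m+2)) ≠ 1 := Fin.zero_ne_one
    set u := A.1 0 0 + s * ∑ i : Fin (m+1), x i.succ * A.1 0 i.succ with hu
    have hB : (A * E).1 0 0 = u := by
      rw [Matrix.SpecialLinearGroup.coe_mul, h1, if_pos rfl, hu, Fin.sum_univ_succ, Finset.mul_sum]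
      simp only [Fin.cons_zero, Fin.cons_succ, mul_zero, zero_add]
      congr 1
      exact Finset.sum_congr rfl fun i _ => by ring
    obtain ⟨w, hw⟩ := hs.exists_left_inv
    set B := A * E with hBdef
    set C := B * tv h10 (w * (1 - u - B.1 0 1)) * tv h10.symm 1 with hC
    have hC0 : C.1 0 0 = 1 := by
      rw [hC, Matrix.SpecialLinearGroup.coe_mul, mul_tv_apply, if_pos rfl,
        Matrix.SpecialLinearGroup.coe_mul, mul_tv_apply, mul_tv_apply, if_neg h10, if_pos rfl, hB]
      linear_combination (1 - u - B.1 0 1) * hw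
    obtain ⟨A', E₁, hE₁, E₂, hE₂, h⟩ := clear ⊤ S hS' C hC0 (by simp) (by simp)
    have hA' := ih (S.comap emb) (fun i j hij b => by
      rw [Subgroup.mem_comap, emb_tv]; exact hS _ _ _ _) A'
    rw [Subgroup.mem_comap, h] at hA'
    rw [Subgroup.mul_mem_cancel_right _ hE₂, Subgroup.mul_mem_cancel_left _ hE₁, hC,
      Subgroup.mul_mem_cancel_right _ (hS _ _ _ _), Subgroup.mul_mem_cancel_right _ (hS _ _ _ _),
      hBdef, Subgroup.mul_mem_cancel_right _ hE] at hA'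
    exact hA'

theorem SL_surj (ℓ : ℕ) (hl : ℓ ≠ 0) (m : ℕ) : Function.Surjective
    (Matrix.SpecialLinearGroup.map (n := Fin (m+1)) (Int.castRingHom (ZMod ℓ))) := by
  rw [← MonoidHom.range_eq_top, eq_top_iff]
  intro A _
  refine tv_gen ℓ hl m _ (fun i j hij b => ?_) A
  obtain ⟨b, rfl⟩ := ZMod.intCast_surjective b
  refine ⟨tv hij b, ?_⟩
  apply Subtype.ext
  ext k l
  simp [tv, Matrix.SpecialLinearGroup.transvection_coe, Matrix.one_apply, Matrix.single_apply,
    apply_ite (Int.cast : ℤ → ZMod ℓ)]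

abbrev redl (m ℓ : ℕ) : Matrix.SpecialLinearGroup (Fin m) ℤ →*
    Matrix.SpecialLinearGroup (Fin m) (ZMod ℓ) :=
  Matrix.SpecialLinearGroup.map (Int.castRingHom (ZMod ℓ))

lemma mem_ker_redl (m ℓ : ℕ) (A : Matrix.SpecialLinearGroup (Fin m) ℤ) :
    A ∈ (redl m ℓ).ker ↔ ∀ i j, (ℓ : ℤ) ∣ A.1 i j - (1 : Matrix (Fin m) (Fin m) ℤ) i j := by
  rw [MonoidHom.mem_ker, Matrix.SpecialLinearGroup.ext_iff]
  refine forall_congr' fun i => forall_congr' fun j => ?_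
  rw [← ZMod.intCast_zmod_eq_zero_iff_dvd, Int.cast_sub, sub_eq_zero]
  have : (((1 : Matrix (Fin m) (Fin m) ℤ) i j : ℤ) : ZMod ℓ)
    = (1 : Matrix (Fin m) (Fin m) (ZMod ℓ)) i j := by
    simp [Matrix.one_apply, apply_ite (Int.cast : ℤ → ZMod ℓ)]
  rw [this]
  rfl

lemma tv_mem_ker_redl (m ℓ : ℕ) {i j : Fin m} (hij : i ≠ j) (b : ℤ) (hb : (ℓ : ℤ) ∣ b) :
    tv hij b ∈ (redl m ℓ).ker := by
  rw [mem_ker_redl]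
  intro k l
  simp only [tv, Matrix.SpecialLinearGroup.transvection_coe, Matrix.add_apply, add_sub_cancel_left,
    Matrix.single_apply]
  split_ifs
  · exact hb
  · exact dvd_zero _

lemma reduction (m ℓ : ℕ) (hl0 : ℓ ≠ 0) (hl4 : 4 ∣ ℓ)
    (S : Subgroup (Matrix.SpecialLinearGroup (Fin (m+3)) ℤ)) [S.Normal]
    (hSG : S ≤ (redl (m+3) ℓ).ker)
    (hS : ∀ (i j : Fin (m+3)) (hij : i ≠ j) (b : ℤ), (ℓ : ℤ) ∣ b → tv hij b ∈ S)
    (A : Matrix.SpecialLinearGroup (Fin (m+3)) ℤ) (hA : A ∈ (redl (m+3) ℓ).ker) :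
    ∃ A' ∈ (redl (m+2) ℓ).ker, emb A' ∈ S → A ∈ S := by
  have hS' : ∀ (i j : Fin (m+3)) (hij : i ≠ j) (b : ℤ), b ∈ Ideal.span {(ℓ : ℤ)} → tv hij b ∈ S :=
    fun i j hij b hb => hS i j hij b (Ideal.mem_span_singleton.1 hb)
  have h01 : (0 : Fin (m+3)) ≠ 1 := by simp [Fin.ext_iff]
  have h02 : (0 : Fin (m+3)) ≠ 2 := by
    have h2 : (2 : ℕ) % (m + 3) = 2 := Nat.mod_eq_of_lt (by omega)
    simp [Fin.ext_iff, h2]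
  have h12 : (1 : Fin (m+3)) ≠ 2 := by
    have h2 : (2 : ℕ) % (m + 3) = 2 := Nat.mod_eq_of_lt (by omega)
    simp [Fin.ext_iff, h2]
  have row : ∀ B ∈ (redl (m+3) ℓ).ker, (ℓ : ℤ) ∣ B.1 0 0 - 1 ∧ ∀ j ≠ 0, (ℓ : ℤ) ∣ B.1 0 j := by
    intro B hB
    rw [mem_ker_redl] at hB
    refine ⟨by simpa using hB 0 0, fun j hj => by simpa [Matrix.one_apply, hj.symm] using hB 0 j⟩
  obtain ⟨hA0, hAj⟩ := row A hA
  obtain ⟨x, hx⟩ := row_bezout A 0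
  have ha0 : A.1 0 0 ≠ 0 := by
    intro h
    rw [h] at hA0
    have : (4 : ℤ) ∣ 0 - 1 := dvd_trans (by exact_mod_cast hl4) hA0
    omega
  -- step one
  set y : Fin (m+3) → ℤ := fun l => if l = 0 ∨ l = 1 then 0 else x l with hy
  set c := ∑ l, A.1 0 l * y l with hc
  have hx' : x 0 * A.1 0 0 + x 1 * A.1 0 1 + c = 1 := by
    have e : ∀ l, x l * A.1 0 l = A.1 0 l * y l + (if l = 0 then x 0 * A.1 0 0 else 0)
        + (if l = 1 then x 1 * A.1 0 1 else 0) := by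
      intro l
      by_cases l0 : l = 0
      · subst l0; simp [hy]
      · by_cases l1 : l = 1
        · subst l1; simp [hy]
        · simp [hy, l0, l1, mul_comm]
    rw [Finset.sum_congr rfl fun l _ => e l, Finset.sum_add_distrib, Finset.sum_add_distrib,
      Finset.sum_ite_eq', Finset.sum_ite_eq', if_pos (Finset.mem_univ _),
      if_pos (Finset.mem_univ _)] at hx
    linear_combination hx
  obtain ⟨s, α, β, hs⟩ : ∃ s : ℤ, IsCoprime (A.1 0 0) (A.1 0 1 + s * (ℓ * c)) := by
    obtain ⟨k, hk⟩ := hA0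
    exact aux_nt _ _ _ ha0 ⟨x 0 + c, x 1, -k, by linear_combination hx' + c * hk⟩
  obtain ⟨E, hE, h1⟩ := op1 _ S hS' 1 (fun l => s * ℓ * y l)
    (fun l => Ideal.mem_span_singleton.2 ⟨s * y l, by ring⟩) (by simp [hy])
  have hB0 : (A * E).1 0 0 = A.1 0 0 := by
    rw [Matrix.SpecialLinearGroup.coe_mul, h1, if_neg h01]
  have hB1 : (A * E).1 0 1 = A.1 0 1 + s * (ℓ * c) := by
    rw [Matrix.SpecialLinearGroup.coe_mul, h1, if_pos rfl, hc, Finset.mul_sum, Finset.mul_sum]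
    congr 1
    exact Finset.sum_congr rfl fun i _ => by ring
  have hBk : A * E ∈ (redl (m+3) ℓ).ker := Subgroup.mul_mem _ hA (hSG hE)
  set B := A * E with hBdef
  obtain ⟨hB0d, hBjd⟩ := row B hBk
  -- step two
  have hδ : (ℓ : ℤ) ∣ 1 - B.1 0 0 - B.1 0 2 := by
    have := dvd_sub hB0d.neg_right (hBjd 2 h02.symm)
    rwa [neg_sub] at this
  set δ := 1 - B.1 0 0 - B.1 0 2 with hδdef
  set F := tv h02 (δ * α) * tv h12 (δ * β) with hF
  have hFS : F ∈ S := S.mul_mem (hS _ _ _ _ (hδ.mul_right _)) (hS _ _ _ _ (hδ.mul_right _))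
  set T : Matrix.SpecialLinearGroup (Fin (m+3)) ℤ := tv h02.symm 1 with hT
  have hBF0 : (B * F).1 0 0 = B.1 0 0 := by
    rw [hF, ← mul_assoc, Matrix.SpecialLinearGroup.coe_mul, Matrix.SpecialLinearGroup.coe_mul,
      mul_tv_apply, if_neg h02, mul_tv_apply, if_neg h02]
  have hBF2 : (B * F).1 0 2 = 1 - B.1 0 0 := by
    rw [hF, ← mul_assoc, Matrix.SpecialLinearGroup.coe_mul, Matrix.SpecialLinearGroup.coe_mul,
      mul_tv_apply, if_pos rfl, mul_tv_apply, if_pos rfl, mul_tv_apply, if_neg h12, hB1, hB0]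
    linear_combination δ * hs + hδdef - hB0
  have hBFk : B * F ∈ (redl (m+3) ℓ).ker := Subgroup.mul_mem _ hBk (hSG hFS)
  obtain ⟨hC0d, hCjd⟩ := row _ hBFk
  have hT0 : (B * F * T).1 0 0 = 1 := by
    rw [Matrix.SpecialLinearGroup.coe_mul, hT, mul_tv_apply, if_pos rfl, hBF0, hBF2]; ring
  have hTj : ∀ j ≠ 0, (B * F * T).1 0 j = (B * F).1 0 j := by
    intro j hj
    rw [Matrix.SpecialLinearGroup.coe_mul, hT, mul_tv_apply, if_neg hj]
  obtain ⟨E', hE', h2⟩ := op2 _ S hS' 0 (fun j => if j = 0 then 0 else - (B * F).1 0 j)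
    (fun l => by
      rw [Ideal.mem_span_singleton]
      split_ifs with h
      · exact dvd_zero _
      · exact (hCjd l h).neg_right) (by simp)
  have hD0 : (B * F * T * E').1 0 0 = 1 := by
    rw [Matrix.SpecialLinearGroup.coe_mul, h2, hT0]; simp
  have hDj : ∀ j ≠ 0, (B * F * T * E').1 0 j = 0 := by
    intro j hj
    rw [Matrix.SpecialLinearGroup.coe_mul, h2, hT0, hTj j hj, if_neg hj]; ring
  have hEc : T * E' * T⁻¹ ∈ S := Subgroup.Normal.conj_mem inferInstance _ hE' _
  set D := B * F * (T * E' * T⁻¹) with hD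
  have hDeq : D = B * F * T * E' * tv h02.symm (-1) := by
    rw [hD, hT, tv, Matrix.SpecialLinearGroup.transvection_inv]
    simp only [mul_assoc]
  have hDk : D ∈ (redl (m+3) ℓ).ker := Subgroup.mul_mem _ hBFk (hSG hEc)
  have hD0' : D.1 0 0 = 1 := by
    rw [hDeq, Matrix.SpecialLinearGroup.coe_mul, mul_tv_apply, if_pos rfl, hD0, hDj 2 h02.symm]
    ring
  obtain ⟨A', E₁, hE₁, E₂, hE₂, h⟩ := clear (Ideal.span {(ℓ : ℤ)}) S hS' D hD0'
    (fun j => Ideal.mem_span_singleton.2 ((row D hDk).2 _ (Fin.succ_ne_zero _)))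
    (fun j => Ideal.mem_span_singleton.2 (by
      have := (mem_ker_redl _ _ _).1 hDk j.succ 0
      simpa [Matrix.one_apply] using this))
  refine ⟨A', ?_, fun hh => ?_⟩
  · have hk : emb A' ∈ (redl (m+3) ℓ).ker := by
      rw [h]
      exact Subgroup.mul_mem _ (Subgroup.mul_mem _ (hSG hE₁) hDk) (hSG hE₂)
    rw [mem_ker_redl] at hk ⊢
    intro i j
    have := hk i.succ j.succ
    rwa [emb_coe, embM_ss, ← embM_one, embM_ss] at this
  · rw [h, Subgroup.mul_mem_cancel_right _ hE₂, Subgroup.mul_mem_cancel_left _ hE₁, hD,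
      Subgroup.mul_mem_cancel_right _ hEc, Subgroup.mul_mem_cancel_right _ hFS, hBdef,
      Subgroup.mul_mem_cancel_right _ hE] at hh
    exact hh

lemma mem_ker_of_emb {H : Type*} [Group H] (m ℓ : ℕ) (hl0 : ℓ ≠ 0) (hl4 : 4 ∣ ℓ)
    (π : Matrix.SpecialLinearGroup (Fin (m+3)) ℤ →* H)
    (hπ : ∀ (i j : Fin (m+3)) (hij : i ≠ j) (b : ℤ), (ℓ : ℤ) ∣ b → π (tv hij b) = 1)
    (hemb : ∀ A' ∈ (redl (m+2) ℓ).ker, π (emb A') = 1)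
    (A : Matrix.SpecialLinearGroup (Fin (m+3)) ℤ) (hA : A ∈ (redl (m+3) ℓ).ker) : π A = 1 := by
  obtain ⟨A', hA', h⟩ := reduction m ℓ hl0 hl4 (π.ker ⊓ (redl (m+3) ℓ).ker) inf_le_right
    (fun i j hij b hb => ⟨hπ i j hij b hb, tv_mem_ker_redl _ _ hij b hb⟩) A hA
  suffices hk : emb A' ∈ (redl (m+3) ℓ).ker from (h ⟨hemb A' hA', hk⟩).1
  rw [mem_ker_redl] at hA' ⊢
  intro i j
  rw [emb_coe, ← embM_one]
  refine Fin.cases ?_ (fun i => ?_) i <;> refine Fin.cases ?_ (fun j => ?_) j <;> simp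
  exact hA' i j

theorem congr_kill {H : Type*} [Group H] (ℓ : ℕ) (hl0 : ℓ ≠ 0) (hl4 : 4 ∣ ℓ) (m : ℕ) :
    ∀ (π : Matrix.SpecialLinearGroup (Fin (m+3)) ℤ →* H)
    (_ : ∀ (i j : Fin (m+3)) (hij : i ≠ j) (b : ℤ), (ℓ : ℤ) ∣ b → π (tv hij b) = 1)
    (A : Matrix.SpecialLinearGroup (Fin (m+3)) ℤ) (_ : A ∈ (redl (m+3) ℓ).ker), π A = 1 := by
  induction m with
  | zero =>
    intro π hπ
    apply mem_ker_of_emb 0 ℓ hl0 hl4 π hπ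
    intro A' hA'
    rw [mem_ker_redl] at hA'
    have hdet : A'.1 0 0 * A'.1 1 1 - A'.1 0 1 * A'.1 1 0 = 1 := by
      have := A'.2
      rwa [Matrix.det_fin_two] at this
    have heq : emb A' = ph _ _ _ _ hdet := by
      apply Subtype.ext
      rw [emb_coe, ph_c]
      ext i j
      fin_cases i <;> fin_cases j <;> rfl
    rw [heq]
    have tvs : ∀ (i j : Fin 3) (hij : i ≠ j) (M : ℤ → Matrix.SpecialLinearGroup (Fin 3) ℤ)
        (_ : ∀ t, (M t).1 = 1 + Matrix.single i j t), ∀ t, (ℓ : ℤ) ∣ t → π (M t) = 1 := by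
      intro i j hij M hM t ht
      have : M t = tv hij t := Subtype.ext (hM t)
      rw [this]; exact hπ i j hij t ht
    apply base3 (ℓ : ℤ) π (by exact_mod_cast hl4) (by exact_mod_cast hl0)
    · refine tvs 0 1 (by decide) _ fun t => ?_
      rw [e01_c]; ext i j; fin_cases i <;> fin_cases j <;> simp [Matrix.one_apply]
    · refine tvs 0 2 (by decide) _ fun t => ?_
      rw [e02_c]; ext i j; fin_cases i <;> fin_cases j <;> simp [Matrix.one_apply]
    · refine tvs 1 0 (by decide) _ fun t => ?_
      rw [e10_c]; ext i j; fin_cases i <;> fin_cases j <;> simp [Matrix.one_apply]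
    · refine tvs 1 2 (by decide) _ fun t => ?_
      rw [e12_c]; ext i j; fin_cases i <;> fin_cases j <;> simp [Matrix.one_apply]
    · refine tvs 2 0 (by decide) _ fun t => ?_
      rw [e20_c]; ext i j; fin_cases i <;> fin_cases j <;> simp [Matrix.one_apply]
    · refine tvs 2 1 (by decide) _ fun t => ?_
      rw [e21_c]; ext i j; fin_cases i <;> fin_cases j <;> simp [Matrix.one_apply]
    · simpa using hA' 0 0
    · simpa using hA' 0 1
    · simpa using hA' 1 0
  | succ m ih =>
    intro π hπ
    apply mem_ker_of_emb (m+1) ℓ hl0 hl4 π hπ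
    intro A' hA'
    refine ih (π.comp emb) (fun i j hij b hb => ?_) A' hA'
    rw [MonoidHom.comp_apply, emb_tv]
    exact hπ _ _ _ _ hb

section
variable {L V : Type*} [Field L] [IsAlgClosed L] [AddCommGroup V] [Module L V]
  [FiniteDimensional L V]

lemma eig_root (x y z : (Module.End L V)ˣ) (hxy : x * y * x⁻¹ = y * z) (hxz : Commute x z)
    (hyz : Commute y z) (c : L) (hc : Module.End.HasEigenvalue (z : Module.End L V) c) :
    ∃ M : ℕ, M ≠ 0 ∧ c ^ M = 1 := by
  have hm : ∀ m : ℕ, x ^ m * y * (x ^ m)⁻¹ = y * z ^ m := by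
    intro m
    induction m with
    | zero => simp
    | succ m ih =>
      have h1 : x ^ (m + 1) * y * (x ^ (m + 1))⁻¹ = x * (x ^ m * y * (x ^ m)⁻¹) * x⁻¹ := by
        rw [pow_succ']; group
      have h2 : x * (y * z ^ m) * x⁻¹ = (x * y * x⁻¹) * (x * z ^ m * x⁻¹) := by group
      rw [h1, ih, h2, hxy, (hxz.pow_right m).eq, mul_inv_cancel_right, mul_assoc, ← pow_succ']
  have hyz' : Commute (z : Module.End L V) (y : Module.End L V) := by
    exact congrArg Units.val hyz.symm.eq
  have hmap := Module.End.mapsTo_genEigenspace_of_comm hyz' c 1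
  obtain ⟨w, hw, hw0⟩ := hc.exists_hasEigenvector
  let W := Module.End.eigenspace (z : Module.End L V) c
  have : Nontrivial W := ⟨⟨⟨w, hw⟩, 0, fun h => hw0 (congrArg Subtype.val h)⟩⟩
  obtain ⟨μ, hμ⟩ := Module.End.exists_eigenvalue ((y : Module.End L V).restrict (p := W) hmap)
  obtain ⟨⟨v, hvW⟩, hv, hv0⟩ := hμ.exists_hasEigenvector
  have hv0' : v ≠ 0 := fun h => hv0 (Subtype.ext h)
  have hyv : (y : Module.End L V) v = μ • v := by
    exact congrArg Subtype.val (Module.End.mem_eigenspace_iff.1 hv)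
  have hzv : (z : Module.End L V) v = c • v := Module.End.mem_eigenspace_iff.1 hvW
  have inj : ∀ (u : (Module.End L V)ˣ) (a : V), (u : Module.End L V) a = 0 → a = 0 := by
    intro u a ha
    have : ((u⁻¹ * u : (Module.End L V)ˣ) : Module.End L V) a = 0 := by
      rw [Units.val_mul, Module.End.mul_apply, ha, map_zero]
    simpa using this
  have hμ0 : μ ≠ 0 := by
    rintro rfl
    exact hv0' (inj y v (by rw [hyv, zero_smul]))
  have hc0 : c ≠ 0 := by
    rintro rfl
    exact hv0' (inj z v (by rw [hzv, zero_smul]))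
  have hzm : ∀ m : ℕ, ((z : Module.End L V) ^ m) v = c ^ m • v := by
    intro m
    induction m with
    | zero => simp
    | succ m ih => rw [pow_succ', Module.End.mul_apply, ih, map_smul, hzv, smul_smul, pow_succ]
  have heig : ∀ m : ℕ, μ * c ^ m ∈ {t | Module.End.HasEigenvalue (y : Module.End L V) t} := by
    intro m
    have h1 : y * (x ^ m)⁻¹ = (x ^ m)⁻¹ * (y * z ^ m) := by rw [← hm m]; group
    have h2 := congrArg (fun u : (Module.End L V)ˣ => (u : Module.End L V) v) h1
    simp only [Units.val_mul, Module.End.mul_apply, Units.val_pow_eq_pow_val, hzm, map_smul, hyv]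
      at h2
    refine Module.End.hasEigenvalue_of_hasEigenvector (x := (((x ^ m)⁻¹ : (Module.End L V)ˣ) :
      Module.End L V) v) ⟨Module.End.mem_eigenspace_iff.2 ?_, fun h => hv0' (inj _ v h)⟩
    rw [h2, smul_smul, mul_comm]
  have hfin := Module.End.finite_hasEigenvalue (y : Module.End L V)
  have hni : ¬ Function.Injective (fun m : ℕ => μ * c ^ m) := fun hi =>
    Set.infinite_range_of_injective hi (hfin.subset (by rintro _ ⟨m, rfl⟩; exact heig m))
  simp only [Function.Injective, not_forall] at hni
  obtain ⟨a, b, hab, hne⟩ := hni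
  have hab' := mul_left_cancel₀ hμ0 hab
  rcases lt_or_gt_of_ne hne with h | h
  · refine ⟨b - a, by omega, ?_⟩
    rw [pow_sub₀ _ hc0 h.le, hab', mul_inv_cancel₀ (pow_ne_zero _ hc0)]
  · refine ⟨a - b, by omega, ?_⟩
    rw [pow_sub₀ _ hc0 h.le, hab', mul_inv_cancel₀ (pow_ne_zero _ hc0)]

open Polynomial in
lemma fin_ord (p : ℕ) [Fact p.Prime] [CharP L p] (x y z : (Module.End L V)ˣ)
    (hxy : x * y * x⁻¹ = y * z) (hxz : Commute x z)
    (hyz : Commute y z) : ∃ M : ℕ, M ≠ 0 ∧ z ^ M = 1 := by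
  classical
  set f : Module.End L V := (z : Module.End L V) with hf
  have hP0 : minpoly L f ≠ 0 := minpoly.ne_zero (Algebra.IsIntegral.isIntegral f)
  have h1 : ∀ c ∈ (minpoly L f).roots, ∃ M : ℕ, M ≠ 0 ∧ c ^ M = 1 := fun c hc =>
    eig_root x y z hxy hxz hyz c (Module.End.hasEigenvalue_of_isRoot ((mem_roots hP0).1 hc))
  have h2 : ∀ s : Multiset L, (∀ c ∈ s, ∃ M : ℕ, M ≠ 0 ∧ c ^ M = 1) →
      ∃ M : ℕ, M ≠ 0 ∧ ∀ c ∈ s, c ^ M = 1 := by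
    intro s
    induction s using Multiset.induction_on with
    | empty => exact fun _ => ⟨1, one_ne_zero, by simp⟩
    | cons a s ih =>
      intro h
      obtain ⟨M, hM, hMs⟩ := ih fun c hc => h c (Multiset.mem_cons_of_mem hc)
      obtain ⟨M', hM', ha⟩ := h a (Multiset.mem_cons_self a s)
      refine ⟨M * M', mul_ne_zero hM hM', fun c hc => ?_⟩
      rcases Multiset.mem_cons.1 hc with rfl | hc
      · rw [mul_comm, pow_mul, ha, one_pow]
      · rw [pow_mul, hMs c hc, one_pow]
  obtain ⟨M, hM, hroots⟩ := h2 _ h1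
  have h3 : ∀ s : Multiset L, (∀ c ∈ s, c ^ M = 1) →
      (s.map (fun a => X - C a)).prod ∣ (X ^ M - 1 : L[X]) ^ s.card := by
    intro s
    induction s using Multiset.induction_on with
    | empty => simp
    | cons a s ih =>
      intro h
      rw [Multiset.map_cons, Multiset.prod_cons, Multiset.card_cons, pow_succ']
      refine mul_dvd_mul ?_ (ih fun c hc => h c (Multiset.mem_cons_of_mem hc))
      rw [dvd_iff_isRoot]
      simp [h a (Multiset.mem_cons_self a s)]
  have h4 : minpoly L f ∣ (X ^ M - 1 : L[X]) ^ (minpoly L f).roots.card := by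
    refine dvd_trans (dvd_of_eq ?_) (h3 _ hroots)
    exact (IsAlgClosed.splits (minpoly L f)).eq_prod_roots_of_monic
      (minpoly.monic (Algebra.IsIntegral.isIntegral f))
  have h5 : minpoly L f ∣ X ^ (M * p ^ (minpoly L f).roots.card) - 1 := by
    have : (X ^ (M * p ^ (minpoly L f).roots.card) - 1 : L[X])
        = (X ^ M - 1) ^ (p ^ (minpoly L f).roots.card) := by
      rw [sub_pow_char_pow, one_pow, pow_mul]
    rw [this]
    exact h4.trans (pow_dvd_pow _ (Nat.lt_pow_self (Fact.out : p.Prime).one_lt).le)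
  refine ⟨M * p ^ (minpoly L f).roots.card,
    mul_ne_zero hM (pow_ne_zero _ (Fact.out : p.Prime).ne_zero), ?_⟩
  rw [minpoly.dvd_iff] at h5
  simp only [map_sub, map_pow, aeval_X, map_one, sub_eq_zero] at h5
  exact Units.ext (by simpa using h5)
end

lemma fin_ord_GL (p : ℕ) (K : Type*) [Field K] [CharP K p] (hp : p ≠ 0) (N : ℕ)
    (x y z : GL (Fin N) K)
    (hxy : x * y * x⁻¹ = y * z) (hxz : Commute x z)
    (hyz : Commute y z) : ∃ M : ℕ, M ≠ 0 ∧ z ^ M = 1 := by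
  have : Fact p.Prime := ⟨(CharP.char_is_prime_or_zero K p).resolve_right hp⟩
  let L := AlgebraicClosure K
  have : CharP L p := charP_of_injective_algebraMap (algebraMap K L).injective p
  let g : Matrix (Fin N) (Fin N) K →* Module.End L (Fin N → L) :=
    ((Matrix.toLinAlgEquiv' : Matrix (Fin N) (Fin N) L ≃ₐ[L] _) : Matrix (Fin N) (Fin N) L →* _).comp
      (RingHom.toMonoidHom (RingHom.mapMatrix (algebraMap K L)))
  have hg : Function.Injective g := by
    intro A B h
    have h' := (Matrix.toLinAlgEquiv' : Matrix (Fin N) (Fin N) L ≃ₐ[L] _).injective h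
    exact Matrix.map_injective (algebraMap K L).injective h'
  obtain ⟨M, hM, h⟩ := fin_ord p (Units.map g x) (Units.map g y) (Units.map g z)
    (by rw [← map_inv, ← map_mul, ← map_mul, hxy, map_mul]) (hxz.map _) (hyz.map _)
  refine ⟨M, hM, Units.map_injective hg ?_⟩
  rw [map_pow, h, map_one]

lemma tv_comm {ι R : Type*} [DecidableEq ι] [Fintype ι] [CommRing R] {i j k : ι} (hij : i ≠ j)
    (hik : i ≠ k) (hkj : k ≠ j) :
    tv hik (1 : R) * tv hkj 1 = tv hkj 1 * tv hij 1 * tv hik 1 := by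
  apply Subtype.ext
  simp only [tv, Matrix.SpecialLinearGroup.coe_mul, Matrix.SpecialLinearGroup.transvection_coe]
  simp [mul_add, add_mul, hij.symm, hik.symm, hkj.symm, hij]
  abel

lemma tv_commute {ι R : Type*} [DecidableEq ι] [Fintype ι] [CommRing R] {i j k l : ι} (hij : i ≠ j)
    (hkl : k ≠ l) (h1 : j ≠ k) (h2 : l ≠ i) :
    Commute (tv hij (1 : R)) (tv hkl 1) := by
  apply Subtype.ext
  simp only [tv, Matrix.SpecialLinearGroup.coe_mul, Matrix.SpecialLinearGroup.transvection_coe]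
  simp [mul_add, add_mul, h1, h2]
  abel

lemma tv_zpow {ι : Type*} [DecidableEq ι] [Fintype ι] {i j : ι} (hij : i ≠ j) (b : ℤ) :
    tv hij b = tv hij (1 : ℤ) ^ b := by
  let f : Multiplicative ℤ →* Matrix.SpecialLinearGroup ι ℤ :=
    { toFun := fun b => tv hij b.toAdd
      map_one' := Matrix.SpecialLinearGroup.transvection_coeff_zero hij
      map_mul' := fun a b => Matrix.SpecialLinearGroup.transvection_add hij _ _ }
  have := map_zpow f (Multiplicative.ofAdd 1) b
  rw [← ofAdd_zsmul, smul_eq_mul, mul_one] at this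
  exact this

/-- Let `k` be a field of characteristic `p > 0` and `n ≥ 3`.  Every finite-dimensional
representation `ρ : SL_n(ℤ) → GL_N(k)` factors through the reduction map
`SL_n(ℤ) → SL_n(ℤ/ℓℤ)` for some `ℓ ≥ 1`. -/
theorem factors_through_finite_quotient_of_charP (p : ℕ) (K : Type*) [Field K]
    [CharP K p] (hp : p ≠ 0) (n N : ℕ) (hn : 3 ≤ n)
    (ρ : Matrix.SpecialLinearGroup (Fin n) ℤ →* GL (Fin N) K) :
    ∃ ℓ : ℕ, 1 ≤ ℓ ∧
      ∃ ρ' : Matrix.SpecialLinearGroup (Fin n) (ZMod ℓ) →* GL (Fin N) K,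
        ρ = ρ'.comp (Matrix.SpecialLinearGroup.map (Int.castRingHom (ZMod ℓ))) := by
  obtain ⟨m, rfl⟩ : ∃ m, n = m + 3 := ⟨n - 3, by omega⟩
  have h1 : ∀ ij : Fin (m+3) × Fin (m+3), ∃ M : ℕ, M ≠ 0 ∧
      ∀ h : ij.1 ≠ ij.2, ρ (tv h 1) ^ M = 1 := by
    rintro ⟨i, j⟩
    by_cases hij : i = j
    · exact ⟨1, one_ne_zero, fun h => absurd hij h⟩
    · obtain ⟨k, hk⟩ : ∃ k, k ∉ ({i, j} : Finset (Fin (m+3))) := by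
        by_contra! hcon
        have h2 : (Finset.univ : Finset (Fin (m+3))) ⊆ {i, j} := fun k _ => hcon k
        have h3 := (Finset.card_le_card h2).trans Finset.card_le_two
        simp at h3
      simp only [Finset.mem_insert, Finset.mem_singleton, not_or] at hk
      have hik : i ≠ k := fun h => hk.1 h.symm
      obtain ⟨M, hM, h⟩ := fin_ord_GL p K hp N (ρ (tv hik 1)) (ρ (tv hk.2 1)) (ρ (tv hij 1))
        (by
          rw [mul_inv_eq_iff_eq_mul, ← map_mul, ← map_mul, ← map_mul]
          exact congrArg ρ (tv_comm hij hik hk.2))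
        ((tv_commute hik hij (fun h => hk.1 h) (fun h => hij h.symm)).map ρ)
        ((tv_commute hk.2 hij (fun h => hij h.symm) (fun h => hk.2 h.symm)).map ρ)
      exact ⟨M, hM, fun _ => h⟩
  choose M hM0 hM using h1
  set ℓ := 4 * ∏ ij, M ij with hl
  have hl0 : ℓ ≠ 0 := mul_ne_zero (by norm_num) (Finset.prod_ne_zero_iff.2 fun ij _ => hM0 ij)
  have hkill := congr_kill ℓ hl0 (Dvd.intro _ rfl) m ρ (by
    intro i j hij b hb
    have hd : ((M (i, j) : ℕ) : ℤ) ∣ b := by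
      refine dvd_trans ?_ hb
      rw [Int.natCast_dvd_natCast]
      exact (Finset.dvd_prod_of_mem M (Finset.mem_univ (i, j))).mul_left 4
    obtain ⟨t, rfl⟩ := hd
    rw [tv_zpow, map_zpow, _root_.zpow_mul, _root_.zpow_natCast, hM (i, j) hij, _root_.one_zpow])
  refine ⟨ℓ, Nat.one_le_iff_ne_zero.2 hl0, ?_⟩
  have hsurj := SL_surj ℓ hl0 (m + 2)
  have hinv := Function.rightInverse_surjInv hsurj
  exact ⟨MonoidHom.liftOfRightInverse _ _ hinv ⟨ρ, fun A hA => hkill A hA⟩,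
    (MonoidHom.liftOfRightInverse_comp _ _ hinv ⟨ρ, fun A hA => hkill A hA⟩).symm⟩
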